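/- Let n, m, N ≥ 1 be natural numbers, let β > 0, r ≥ 0 and ε > 0 be real numbers, let V, f_1, …, f_n and d_{k,j} (for k ∈ {1,…,n}, j ∈ {1,…,m}) be polynomials in ℝ[x_1,…,x_n], and let ξ_1, …, ξ_N ∈ ℝ^m. For j ∈ {1,…,m} define q_j = ∑_{k=1}^n (∂V/∂x_k)·d_{k,j}, and for i ∈ {1,…,N} define V̇_{ξ_i} = ∑_{k=1}^n (∂V/∂x_k)·(f_k + ∑_{j=1}^m (ξ_i)_j·d_{k,j}) and s_i = V̇_{ξ_i} + ε·∑_{k=1}^n x_k². If for every i ∈ {1,…,N} and every j ∈ {1,…,m} both polynomials r·q_j − β·s_i and −r·q_j − β·s_i are sums of squares, then for all x ∈ ℝⁿ, r·max_{1 ≤ j ≤ m} |q_j(x)| + max_{1 ≤ i ≤ N} β·(V̇_{ξ_i}(x) + ε‖x‖₂²) ≤ 0. -/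

import Mathlib

/-!
A sum of squares is nonnegative at every point, so the certificates give
`± r * q j x ≤ -β * s i x`, that is `r * |q j x| + β * s i x ≤ 0`, for every pair `(i, j)`. The
maxima over `i` and `j` are taken independently and are attained, so the claim is this inequality
at a maximizing pair.
-/

open MvPolynomial

theorem eval_nonneg_of_isSumSq {n : ℕ} {p : MvPolynomial (Fin n) ℝ} (hp : IsSumSq p)
    (x : Fin n → ℝ) : 0 ≤ eval x p := by
  induction hp with
  | zero => simp
  | sq_add a _ ih =>
    rw [map_add, map_mul]
    exact add_nonneg (mul_self_nonneg _) ih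

/-- Proposition 2, SOS sufficiency part: with
`q j = ∑ k, (∂V/∂x k)·d k j`, `V̇_{ξ i} = ∑ k, (∂V/∂x k)·(f k + ∑ j, (ξ i) j · d k j)` and
`s i = V̇_{ξ i} + ε·∑ k, x k²`, if for every `i, j` both `r·q j − β·s i` and `−r·q j − β·s i`
are sums of squares, then for all `x : ℝⁿ`,
`r·max_j |q j (x)| + max_i β·(V̇_{ξ i}(x) + ε‖x‖₂²) ≤ 0`. -/
theorem drcc_sos_sufficiency (n m N : ℕ) (hn : 1 ≤ n) (hm : 1 ≤ m) (hN : 1 ≤ N)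
    (β r ε : ℝ) (hβ : 0 < β) (hr : 0 ≤ r) (hε : 0 < ε)
    (V : MvPolynomial (Fin n) ℝ) (f : Fin n → MvPolynomial (Fin n) ℝ)
    (d : Fin n → Fin m → MvPolynomial (Fin n) ℝ) (ξ : Fin N → (Fin m → ℝ))
    (q : Fin m → MvPolynomial (Fin n) ℝ)
    (hq : ∀ j, q j = ∑ k, pderiv k V * d k j)
    (Vdot : Fin N → MvPolynomial (Fin n) ℝ)
    (hVdot : ∀ i, Vdot i = ∑ k, pderiv k V * (f k + ∑ j, C (ξ i j) * d k j))
    (s : Fin N → MvPolynomial (Fin n) ℝ)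
    (hs : ∀ i, s i = Vdot i + C ε * ∑ k, (X k : MvPolynomial (Fin n) ℝ) ^ 2)
    (hSOS : ∀ i j, IsSumSq (C r * q j - C β * s i) ∧ IsSumSq (-(C r * q j) - C β * s i)) :
    ∀ x : Fin n → ℝ,
      r * (⨆ j, |eval x (q j)|) + (⨆ i, β * (eval x (Vdot i) + ε * ∑ k, x k ^ 2)) ≤ 0 := by
  intro x
  have : Nonempty (Fin m) := ⟨⟨0, hm⟩⟩
  have : Nonempty (Fin N) := ⟨⟨0, hN⟩⟩
  -- Both suprema run over finite nonempty index sets, hence are attained, at `j` and `i` say.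
  obtain ⟨j, hj⟩ := exists_eq_ciSup_of_finite (f := fun j => |eval x (q j)|)
  obtain ⟨i, hi⟩ := exists_eq_ciSup_of_finite
    (f := fun i => β * (eval x (Vdot i) + ε * ∑ k, x k ^ 2))
  rw [← hj, ← hi]
  -- The two certificates for this pair `(i, j)`, evaluated at `x`, cover the two signs of `q j`.
  have h1 := eval_nonneg_of_isSumSq (hSOS i j).1 x
  have h2 := eval_nonneg_of_isSumSq (hSOS i j).2 x
  simp only [hs, map_sub, map_neg, map_mul, map_add, map_sum, map_pow, eval_C, eval_X] at h1 h2
  rcases abs_cases (eval x (q j)) with ⟨h, -⟩ | ⟨h, -⟩ <;> simp only [h] <;> linarith
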